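/- arXiv:1801.09629 — 9 statements merged into one kernel-verified Lean document; each statement's English description precedes it below -/
import Mathlib

section
/- Let n be a positive integer, let G be a subgroup of the group 𝕊_n of n×n permutation matrices, and let K/F be a finite Galois extension together with an identification of Gal(K/F) with G. Let α ∈ K be a normal element for K/F. For i = 1,…,n set y_i = Σ_{g ∈ G} g(α x_i) = Σ_{g ∈ G} g(α)·x_{ρ_g(i)}, an element of K(x_1,…,x_n). Then the fixed field of the G-action on K(x_1,…,x_n) equals F(y_1,…,y_n); in particular y_1,…,y_n are algebraically independent over F. -/
set_option maxHeartbeats 1000000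
set_option synthInstance.maxHeartbeats 1000000

/-- The canonical embedding of `K` into the rational function field
`K(x₁, …, xₙ) = Frac(K[x₁, …, xₙ])`. -/
noncomputable def ratFuncιK (n : ℕ) (K : Type*) [Field K] :
    K →+* FractionRing (MvPolynomial (Fin n) K) :=
  (algebraMap (MvPolynomial (Fin n) K) (FractionRing (MvPolynomial (Fin n) K))).comp
    MvPolynomial.C

/-- The variable `xᵢ`, viewed as an element of the rational function field
`K(x₁, …, xₙ) = Frac(K[x₁, …, xₙ])`. -/
noncomputable def ratFuncX (n : ℕ) (K : Type*) [Field K] (i : Fin n) :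
    FractionRing (MvPolynomial (Fin n) K) :=
  algebraMap (MvPolynomial (Fin n) K) (FractionRing (MvPolynomial (Fin n) K))
    (MvPolynomial.X i)

/-- `α ∈ K` is a normal element of the finite Galois extension `K/F` if its Galois conjugates
`{g α : g ∈ Gal(K/F)}` form an `F`-basis of `K`. -/
def IsNormalElement (F : Type*) {K : Type*} [Field F] [Field K] [Algebra F K] (α : K) : Prop :=
  LinearIndependent F (fun g : K ≃ₐ[F] K => g α) ∧
    Submodule.span F (Set.range fun g : K ≃ₐ[F] K => g α) = ⊤

/-- The matrix expressing `yᵢ = ∑ g, g(α) x_{g(i)}` in terms of the variables `xⱼ`. -/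
noncomputable def conjugateMatrix {n : ℕ} {G : Subgroup (Equiv.Perm (Fin n))} [Fintype G]
    {K : Type*} [Field K] (a : G → K) : Matrix (Fin n) (Fin n) K :=
  fun i j => ∑ g : G, if (g : Equiv.Perm (Fin n)) i = j then a g else 0

section conjugateMatrix

variable {n : ℕ} {G : Subgroup (Equiv.Perm (Fin n))} [Fintype G]

lemma sum_conjugateMatrix_mul {K R : Type*} [Field K] [CommSemiring R] (f : K →+* R)
    (a : G → K) (x : Fin n → R) (i : Fin n) :
    ∑ j, f (conjugateMatrix a i j) * x j = ∑ g : G, f (a g) * x ((g : Equiv.Perm (Fin n)) i) := by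
  simp only [conjugateMatrix, map_sum, Finset.sum_mul]
  rw [Finset.sum_comm]
  refine Finset.sum_congr rfl fun g _ => ?_
  rw [Finset.sum_eq_single ((g : Equiv.Perm (Fin n)) i)] <;> simp +contextual [eq_comm]

lemma vecMul_conjugateMatrix {K : Type*} [Field K] (a : G → K) (c : Fin n → K) (j : Fin n) :
    Matrix.vecMul c (conjugateMatrix a) j =
      ∑ g : G, c ((g : Equiv.Perm (Fin n)).symm j) * a g := by
  simp only [Matrix.vecMul, dotProduct, conjugateMatrix, Finset.mul_sum]
  rw [Finset.sum_comm]
  refine Finset.sum_congr rfl fun g _ => ?_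
  rw [Finset.sum_eq_single ((g : Equiv.Perm (Fin n)).symm j)]
  · simp
  · intro i _ hi
    rw [if_neg (fun h => hi (by rw [← h, Equiv.symm_apply_apply])), mul_zero]
  · simp

variable {F K : Type*} [Field F] [Field K] [Algebra F K]

lemma vecMul_conjugateMatrix_galois (e : G ≃* (K ≃ₐ[F] K)) {α : K} {c : Fin n → K}
    (hc : Matrix.vecMul c (conjugateMatrix fun g : G => e g α) = 0) (h : G) :
    Matrix.vecMul (fun i => e h (c i)) (conjugateMatrix fun g : G => e g α) = 0 := by
  ext j
  have hj := congrArg (e h) (congrFun hc ((h : Equiv.Perm (Fin n)).symm j))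
  rw [vecMul_conjugateMatrix] at hj ⊢
  simp only [map_sum, map_mul, Pi.zero_apply, map_zero] at hj ⊢
  rw [← hj]
  refine (Fintype.sum_equiv (Equiv.mulLeft h) _ _ fun g => ?_).symm
  simp only [Equiv.coe_mulLeft, map_mul, AlgEquiv.mul_apply, Subgroup.coe_mul]
  rfl

variable [FiniteDimensional F K] [IsGalois F K]

/-- The trace as a sum over a group identified with the Galois group. -/
lemma algebraMap_trace_eq_sum {H : Type*} [Group H] [Fintype H] (e : H ≃* (K ≃ₐ[F] K)) (a : K) :
    algebraMap F K (Algebra.trace F K a) = ∑ g : H, e g a := by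
  rw [trace_eq_sum_automorphisms]
  exact (Fintype.sum_equiv e.toEquiv _ _ fun _ => rfl).symm

/-- The matrix of conjugates of a normal element is invertible. -/
lemma isUnit_conjugateMatrix (e : G ≃* (K ≃ₐ[F] K)) {α : K}
    (hα : LinearIndependent F fun g : K ≃ₐ[F] K => g α) :
    IsUnit (conjugateMatrix fun g : G => e g α) := by
  rw [← Matrix.vecMul_injective_iff_isUnit]
  have hinj : Function.Injective (Matrix.vecMulLinear (conjugateMatrix fun g : G => e g α)) := by
    rw [injective_iff_map_eq_zero]
    intro c hc
    ext j
    refine (traceForm_nondegenerate F K).1 (c j) fun b => ?_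
    have hb : Matrix.vecMul (b • c) (conjugateMatrix fun g : G => e g α) = 0 := by
      rw [Matrix.smul_vecMul]
      exact (congrArg (b • ·) hc).trans (smul_zero b)
    have hsum := Finset.sum_eq_zero fun (h : G) (_ : h ∈ Finset.univ) =>
      congrFun (vecMul_conjugateMatrix_galois e hb h) j
    simp only [vecMul_conjugateMatrix] at hsum
    rw [Finset.sum_comm] at hsum
    simp only [← Finset.sum_mul, ← algebraMap_trace_eq_sum, ← Algebra.smul_def] at hsum
    have hli := Fintype.linearIndependent_iff.1 (hα.comp e e.injective) _ hsum 1
    rw [Algebra.traceForm_apply, mul_comm]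
    exact hli
  exact hinj

end conjugateMatrix

/-- An invertible linear substitution is injective on polynomials. -/
lemma aeval_linear_injective {σ K : Type*} [Fintype σ] [DecidableEq σ] [Field K]
    {M : Matrix σ σ K} (hM : IsUnit M) :
    Function.Injective (MvPolynomial.aeval (R := K)
      fun i => ∑ j, MvPolynomial.C (M i j) * (MvPolynomial.X j : MvPolynomial σ K)) := by
  obtain ⟨N, hN⟩ := hM.exists_right_inv
  refine Function.LeftInverse.injective (g := MvPolynomial.aeval (R := K)
    fun i => ∑ j, MvPolynomial.C (N i j) * (MvPolynomial.X j : MvPolynomial σ K)) fun p => ?_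
  rw [← AlgHom.comp_apply]
  suffices h : (MvPolynomial.aeval (R := K)
      fun i => ∑ j, MvPolynomial.C (N i j) * (MvPolynomial.X j : MvPolynomial σ K)).comp
      (MvPolynomial.aeval fun i => ∑ j, MvPolynomial.C (M i j) * MvPolynomial.X j) =
      AlgHom.id K _ by rw [h]; rfl
  refine MvPolynomial.algHom_ext fun i => ?_
  simp only [AlgHom.comp_apply, MvPolynomial.aeval_X, map_sum, map_mul, MvPolynomial.aeval_C,
    MvPolynomial.algebraMap_eq, Finset.mul_sum, AlgHom.id_apply]
  rw [Finset.sum_comm]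
  simp only [← mul_assoc, ← map_mul, ← Finset.sum_mul, ← map_sum, ← Matrix.mul_apply, hN]
  simp [Matrix.one_apply]

/-- If `E` is generated as a field by a fixed subfield `L` and a copy of `K` on which `H` acts
through the Galois group of `K/F`, with `F ⊆ L`, then `L` is the full fixed field. -/
lemma fixedPoints_le_of_adjoin_eq_top {F K E H : Type*} [Field F] [Field K] [Algebra F K]
    [FiniteDimensional F K] [IsGalois F K] [Field E] [Group H] [Fintype H]
    [MulSemiringAction H E] (e : H ≃* (K ≃ₐ[F] K)) (ι : K →+* E)
    (hι : ∀ (g : H) (a : K), g • ι a = ι (e g a)) (L : Subfield E)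
    (hFL : ∀ a : F, ι (algebraMap F K a) ∈ L) (hL : L ≤ FixedPoints.subfield H E)
    (htop : IntermediateField.adjoin L (Set.range ι) = ⊤) :
    FixedPoints.subfield H E ≤ L := by
  have halg : ∀ x ∈ Set.range ι, IsAlgebraic L x := by
    rintro _ ⟨a, rfl⟩
    let φ : F →+* L := (ι.comp (algebraMap F K)).codRestrict L hFL
    obtain ⟨p, hp0, hp⟩ := Algebra.IsAlgebraic.isAlgebraic (R := F) a
    refine ⟨p.map φ, (Polynomial.map_ne_zero_iff φ.injective).2 hp0, ?_⟩
    have hφ : (algebraMap L E).comp φ = ι.comp (algebraMap F K) := rfl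
    rw [Polynomial.aeval_def, Polynomial.eval₂_map, hφ, ← Polynomial.hom_eval₂,
      ← Polynomial.aeval_def, hp, map_zero]
  have hspan : ∀ w : E, w ∈ Submodule.span L (Set.range ι) := by
    intro w
    have hw : w ∈ Algebra.adjoin L (Set.range ι) := by
      rw [← IntermediateField.adjoin_toSubalgebra_of_isAlgebraic halg, htop]
      trivial
    rw [← Subalgebra.mem_toSubmodule, Algebra.adjoin_eq_span] at hw
    have hmono : (Submonoid.closure (Set.range ι) : Set E) = Set.range ι :=
      congrArg SetLike.coe (Submonoid.closure_eq (MonoidHom.mrange (ι : K →* E)))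
    rwa [hmono] at hw
  have htr : ∀ w : E, ∑ g : H, g • w ∈ L := by
    intro w
    induction hspan w using Submodule.span_induction with
    | mem x hx =>
      obtain ⟨a, rfl⟩ := hx
      simp only [hι, ← map_sum]
      rw [← algebraMap_trace_eq_sum]
      exact hFL _
    | zero => simp
    | add x y _ _ hx hy =>
      simp only [smul_add, Finset.sum_add_distrib]
      exact L.add_mem hx hy
    | smul l x _ hx =>
      have hl : ∀ g : H, g • (l • x) = l • g • x := fun g => by
        rw [Subfield.smul_def, smul_eq_mul, smul_mul', hL l.2 g]; rfl
      simp only [hl, ← Finset.smul_sum]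
      exact L.mul_mem l.2 hx
  intro z hz
  obtain ⟨b, hb⟩ := Algebra.trace_surjective F K 1
  have hzb : ∑ g : H, g • (ι b * z) = z := by
    have hg : ∀ g : H, g • (ι b * z) = ι (e g b) * z := fun g => by
      rw [smul_mul', hι, hz g]
    simp only [hg, ← Finset.sum_mul, ← map_sum]
    rw [← algebraMap_trace_eq_sum, hb, map_one, map_one, one_mul]
  exact hzb ▸ htr _

/-- A subfield of `K(x₁, …, xₙ)` containing `K` and the variables is everything. -/
lemma mem_of_ratFuncιK_mem_of_ratFuncX_mem {n : ℕ} {K : Type*} [Field K]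
    (S : Subfield (FractionRing (MvPolynomial (Fin n) K))) (hK : ∀ a, ratFuncιK n K a ∈ S)
    (hX : ∀ i, ratFuncX n K i ∈ S) (z : FractionRing (MvPolynomial (Fin n) K)) : z ∈ S := by
  have hpoly : ∀ p : MvPolynomial (Fin n) K, algebraMap _ (FractionRing _) p ∈ S := by
    intro p
    induction p using MvPolynomial.induction_on with
    | C a => exact hK a
    | add p q hp hq => rw [map_add]; exact S.add_mem hp hq
    | mul_X p i hp => rw [map_mul]; exact S.mul_mem hp (hX i)
  obtain ⟨p, q, _, rfl⟩ := IsFractionRing.div_surjective (A := MvPolynomial (Fin n) K) z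
  exact S.div_mem (hpoly p) (hpoly q)

/-- **Constructive no-name lemma, permutation case.**  Let `G` be a subgroup of the group
`𝕊_n ≅ S_n` of `n × n` permutation matrices (a permutation matrix `g` is identified with the
permutation `ρ_g` sending `i` to `j` when `g eᵢ = eⱼ`), let `K/F` be a finite Galois extension
with Galois group identified with `G` via `e : G ≃* Gal(K/F)`, and let `α ∈ K` be a normal
element for `K/F`.  Let `G` act on `K(x₁, …, xₙ)` through the Galois action on `K` and by
`g(xᵢ) = x_{ρ_g(i)}` on the variables, and set `yᵢ = ∑_{g ∈ G} g(α · xᵢ)`.  Then the fixed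
field of the `G`-action equals `F(y₁, …, yₙ)`; in particular `y₁, …, yₙ` are algebraically
independent over `F` (the evaluation map `F[Y₁, …, Yₙ] → K(x₁, …, xₙ)`, `Yᵢ ↦ yᵢ`, is
injective). -/
theorem noname_lemma_permutation_case
    (n : ℕ) (hn : 0 < n) (G : Subgroup (Equiv.Perm (Fin n))) [Fintype G]
    (F K : Type*) [Field F] [Field K] [Algebra F K] [FiniteDimensional F K] [IsGalois F K]
    (e : G ≃* (K ≃ₐ[F] K)) (α : K) (hα : IsNormalElement F α)
    [MulSemiringAction G (FractionRing (MvPolynomial (Fin n) K))]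
    (hactK : ∀ (g : G) (a : K), g • ratFuncιK n K a = ratFuncιK n K ((e g) a))
    (hactX : ∀ (g : G) (i : Fin n),
      g • ratFuncX n K i = ratFuncX n K ((g : Equiv.Perm (Fin n)) i))
    (y : Fin n → FractionRing (MvPolynomial (Fin n) K))
    (hy : ∀ i : Fin n, y i = ∑ g : G, g • (ratFuncιK n K α * ratFuncX n K i)) :
    FixedPoints.subfield G (FractionRing (MvPolynomial (Fin n) K)) =
      Subfield.closure
        (Set.range ((ratFuncιK n K).comp (algebraMap F K)) ∪ Set.range y) ∧
    Function.Injective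
      (MvPolynomial.eval₂Hom ((ratFuncιK n K).comp (algebraMap F K)) y) := by
  have hy' : ∀ i, y i = ∑ j, ratFuncιK n K (conjugateMatrix (fun g : G => e g α) i j) *
      ratFuncX n K j := fun i => by
    rw [sum_conjugateMatrix_mul, hy]
    simp only [smul_mul', hactK, hactX]
  have hM := isUnit_conjugateMatrix (G := G) e hα.1
  generalize conjugateMatrix (fun g : G => e g α) = M at hy' hM
  have hfix : Subfield.closure (Set.range ((ratFuncιK n K).comp (algebraMap F K)) ∪
      Set.range y) ≤ FixedPoints.subfield G (FractionRing (MvPolynomial (Fin n) K)) := by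
    rw [Subfield.closure_le]
    rintro _ (⟨a, rfl⟩ | ⟨i, rfl⟩) g
    · simp [hactK]
    · rw [hy, Finset.smul_sum]
      refine Fintype.sum_equiv (Equiv.mulLeft g) _ _ fun h => ?_
      rw [Equiv.coe_mulLeft, mul_smul]
  refine ⟨le_antisymm ?_ hfix, ?_⟩
  · refine fixedPoints_le_of_adjoin_eq_top e (ratFuncιK n K) hactK _
      (fun a => Subfield.subset_closure (Or.inl ⟨a, rfl⟩)) hfix ?_
    rw [eq_top_iff]
    rintro z -
    set S := IntermediateField.adjoin (Subfield.closure
      (Set.range ((ratFuncιK n K).comp (algebraMap F K)) ∪ Set.range y))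
      (Set.range (ratFuncιK n K))
    have hK : ∀ a, ratFuncιK n K a ∈ S := fun a => IntermediateField.subset_adjoin _ _ ⟨a, rfl⟩
    have hyS : ∀ i, y i ∈ S := fun i =>
      S.algebraMap_mem ⟨y i, Subfield.subset_closure (Or.inr ⟨i, rfl⟩)⟩
    refine mem_of_ratFuncιK_mem_of_ratFuncX_mem S.toSubfield hK (fun i => ?_) z
    obtain ⟨N, hN⟩ := hM.exists_left_inv
    have hx : ratFuncX n K i = ∑ j, ratFuncιK n K (N i j) * y j := by
      simp only [hy', Finset.mul_sum]
      rw [Finset.sum_comm]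
      simp only [← mul_assoc, ← map_mul, ← Finset.sum_mul, ← map_sum, ← Matrix.mul_apply, hN]
      simp [Matrix.one_apply]
    rw [hx]
    exact sum_mem fun j _ => S.mul_mem (hK _) (hyS j)
  · have hcomp : MvPolynomial.eval₂Hom ((ratFuncιK n K).comp (algebraMap F K)) y =
        ((algebraMap (MvPolynomial (Fin n) K) (FractionRing (MvPolynomial (Fin n) K))).comp
          (MvPolynomial.aeval (R := K) fun i => ∑ j, MvPolynomial.C (M i j) *
            (MvPolynomial.X j : MvPolynomial (Fin n) K)).toRingHom).comp
          (MvPolynomial.map (algebraMap F K)) := by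
      refine MvPolynomial.ringHom_ext (fun a => ?_) fun i => ?_
      · simp [ratFuncιK]
      · simp [hy', ratFuncιK, ratFuncX]
    rw [hcomp]
    exact ((IsFractionRing.injective _ _).comp (aeval_linear_injective hM)).comp
      (MvPolynomial.map_injective _ (algebraMap F K).injective)
end

section
/- Let n be a positive integer, let G be a subgroup of the group 𝔹_n of n×n signed permutation matrices, and let K/F be a finite Galois extension together with an identification of Gal(K/F) with G. Let α ∈ K be a normal element for K/F. For i = 1,…,n set y_i = Σ_{g ∈ G} g(α/(1+x_i)), an element of K(x_1,…,x_n). Then the fixed field of the G-action on K(x_1,…,x_n) equals F(y_1,…,y_n); in particular y_1,…,y_n are algebraically independent over F. -/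
set_option maxHeartbeats 1000000
set_option synthInstance.maxHeartbeats 1000000

/-- The `i`-th column of a signed permutation matrix `g` (an element of `GL(n, ℤ)`),
i.e. the image `g eᵢ` of the `i`-th standard basis vector of `ℤⁿ`. -/
def sgnPermCol {n : ℕ} (g : Matrix.GeneralLinearGroup (Fin n) ℤ) (i : Fin n) : Fin n → ℤ :=
  Matrix.mulVec ((g : Matrix.GeneralLinearGroup (Fin n) ℤ) : Matrix (Fin n) (Fin n) ℤ)
    (Pi.single i 1)

section SemilinearAction

variable {F K M G ι : Type*} [Field F] [Field K] [Field M] [Algebra F K] [Algebra K M]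
  [Algebra F M] [IsScalarTower F K M] [Group G] [Fintype G] [MulSemiringAction G M] [Fintype ι]

/-- A family of `n` elements generating a field of transcendence degree `n` is algebraically
independent. -/
theorem algebraicIndependent_of_adjoin_eq_top {x u : ι → M} (hx : IsTranscendenceBasis K x)
    (hu : IntermediateField.adjoin K (Set.range u) = ⊤) : AlgebraicIndependent K u := by
  have alg : Algebra.IsAlgebraic (Algebra.adjoin K (Set.range u)) M := by
    refine ⟨fun m ↦ ?_⟩
    have hm : m ∈ IntermediateField.adjoin K (Set.range u) := hu ▸ IntermediateField.mem_top
    obtain ⟨r, hr, s, hs, rfl⟩ := IntermediateField.mem_adjoin_iff_div.1 hm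
    rw [div_eq_mul_inv]
    exact (isAlgebraic_algebraMap (⟨r, hr⟩ : Algebra.adjoin K (Set.range u))).mul
      (isAlgebraic_algebraMap (⟨s, hs⟩ : Algebra.adjoin K (Set.range u))).inv
  exact (Algebra.IsAlgebraic.isTranscendenceBasis_of_lift_le_trdeg_of_finite K u
    hx.lift_cardinalMk_eq_trdeg.le).1

/-- The members of an algebraically independent family are linearly independent modulo
constants. -/
theorem AlgebraicIndependent.eq_zero_of_sum_add_eq_zero {z : ι → M}
    (hz : AlgebraicIndependent K z) {d : ι → K} {d₀ : K}
    (h : ∑ j, algebraMap K M (d j) * z j + algebraMap K M d₀ = 0) (j : ι) : d j = 0 := by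
  classical
  have hp : (∑ j, MvPolynomial.C (d j) * MvPolynomial.X j + MvPolynomial.C d₀ :
      MvPolynomial ι K) = 0 := by
    apply hz.eq_zero_of_aeval_eq_zero
    simpa using h
  have := congrArg (MvPolynomial.coeff (Finsupp.single j 1)) hp
  have h0 : (0 : ι →₀ ℕ) ≠ Finsupp.single j 1 := by
    simp [eq_comm]
  simpa [MvPolynomial.coeff_sum, MvPolynomial.coeff_C_mul, MvPolynomial.coeff_X,
    MvPolynomial.coeff_C, h0, Finsupp.single_left_inj] using this

/-- If `G` acts on a family `z` by affine maps over `F`, then the traces `∑ g, g • (α * z i)` are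
affine combinations of the members of `z`. -/
theorem sum_smul_algebraMap_mul_eq_affine
    (e : G ≃* (K ≃ₐ[F] K))
    (hact : ∀ (g : G) (a : K), g • algebraMap K M a = algebraMap K M (e g a))
    (α : K) {z : ι → M} {a : G → ι → ι → F} {b : G → ι → F}
    (hab : ∀ g i, g • z i = ∑ j, algebraMap F M (a g i j) * z j + algebraMap F M (b g i))
    (i : ι) :
    ∑ g : G, g • (algebraMap K M α * z i) =
      ∑ j, algebraMap K M (∑ g : G, e g α * algebraMap F K (a g i j)) * z j +
        algebraMap K M (∑ g : G, e g α * algebraMap F K (b g i)) := by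
  simp only [smul_mul', hact, hab, map_sum, map_mul, ← IsScalarTower.algebraMap_apply F K M,
    mul_add, Finset.sum_add_distrib, Finset.mul_sum, Finset.sum_mul, mul_assoc]
  rw [Finset.sum_comm]

variable [FiniteDimensional F K] [IsGalois F K]

/-- Averaging a scalar over a semilinear action gives its trace. -/
theorem sum_smul_algebraMap_eq_trace
    (e : G ≃* (K ≃ₐ[F] K))
    (hact : ∀ (g : G) (a : K), g • algebraMap K M a = algebraMap K M (e g a))
    (a : K) :
    ∑ g : G, g • algebraMap K M a = algebraMap F M (Algebra.trace F K a) := by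
  rw [IsScalarTower.algebraMap_apply F K M, trace_eq_sum_automorphisms, map_sum]
  exact Fintype.sum_equiv e.toEquiv _ _ fun g ↦ hact g a

/-- If an intermediate field `L` of invariants generates `M` together with `K`, then it contains
all invariants. -/
theorem mem_of_fixed_of_adjoin_eq_top
    (e : G ≃* (K ≃ₐ[F] K))
    (hact : ∀ (g : G) (a : K), g • algebraMap K M a = algebraMap K M (e g a))
    (L : IntermediateField F M)
    (hL : ∀ l ∈ L, ∀ g : G, g • l = l)
    (htop : IntermediateField.adjoin L (Set.range (algebraMap K M)) = ⊤)
    {m : M} (hm : ∀ g : G, g • m = m) : m ∈ L := by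
  have halg : ∀ x ∈ Set.range (algebraMap K M), IsAlgebraic L x := by
    rintro _ ⟨a, rfl⟩
    have : IsAlgebraic F (algebraMap K M a) :=
      (Algebra.IsAlgebraic.isAlgebraic (R := F) a).algebraMap
    exact this.tower_top L
  have hspan : Submodule.span L (Set.range (algebraMap K M)) = ⊤ := by
    have h := Algebra.adjoin_eq_span (R := L) (Set.range (algebraMap K M))
    rw [← IntermediateField.adjoin_toSubalgebra_of_isAlgebraic halg, htop] at h
    have hc : Submonoid.closure (Set.range (algebraMap K M)) =
        MonoidHom.mrange (algebraMap K M : K →* M) :=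
      Submonoid.closure_eq (MonoidHom.mrange (algebraMap K M : K →* M))
    rw [hc] at h
    simpa using h.symm
  have hsum : ∀ x : M, ∑ g : G, g • x ∈ L := by
    intro x
    have hx : x ∈ Submodule.span L (Set.range (algebraMap K M)) := hspan ▸ Submodule.mem_top
    induction hx using Submodule.span_induction with
    | mem x hx =>
      obtain ⟨a, rfl⟩ := hx
      rw [sum_smul_algebraMap_eq_trace e hact]
      exact L.algebraMap_mem _
    | zero => simp
    | add x y _ _ hx hy =>
      simp only [smul_add, Finset.sum_add_distrib]
      exact add_mem hx hy
    | smul l x _ hx =>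
      have : ∑ g : G, g • (l • x) = l * ∑ g : G, g • x := by
        simp only [Algebra.smul_def, smul_mul', Finset.mul_sum]
        exact Finset.sum_congr rfl fun g _ ↦ congrArg (· * _) (hL l l.2 g)
      rw [this]
      exact mul_mem l.2 hx
  obtain ⟨τ, hτ⟩ := Algebra.trace_surjective F K 1
  have h := hsum (algebraMap K M τ * m)
  simp only [smul_mul', hm, ← Finset.sum_mul] at h
  rwa [sum_smul_algebraMap_eq_trace e hact, hτ, map_one, one_mul] at h

/-- If `G` acts on an algebraically independent family `z` by affine maps over `F`, then the
traces `∑ g, g • (α * z i)` with `α` a normal element have invertible linear part. -/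
theorem det_linearPart_ne_zero [DecidableEq ι]
    (e : G ≃* (K ≃ₐ[F] K))
    (hact : ∀ (g : G) (a : K), g • algebraMap K M a = algebraMap K M (e g a))
    {α : K} (hα : IsNormalElement F α) {z : ι → M}
    (hz : AlgebraicIndependent K z) {a : G → ι → ι → F} {b : G → ι → F}
    (hab : ∀ g i, g • z i = ∑ j, algebraMap F M (a g i j) * z j + algebraMap F M (b g i))
    (ha : ∀ i, a 1 i = Pi.single i 1) :
    (Matrix.of fun i j ↦ ∑ g : G, e g α * algebraMap F K (a g i j)).det ≠ 0 := by
  set A : Matrix ι ι K := Matrix.of fun i j ↦ ∑ g : G, e g α * algebraMap F K (a g i j) with hA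
  set B : ι → K := fun i ↦ ∑ g : G, e g α * algebraMap F K (b g i) with hB
  set y : ι → M := fun i ↦ ∑ g : G, g • (algebraMap K M α * z i) with hy
  have hyfix : ∀ i (g : G), g • y i = y i := fun i g ↦ by
    simp only [hy, Finset.smul_sum, ← mul_smul]
    exact Fintype.sum_equiv (Equiv.mulLeft g) _ _ fun _ ↦ rfl
  have hyA : ∀ i, y i = ∑ j, algebraMap K M (A i j) * z j + algebraMap K M (B i) := fun i ↦
    sum_smul_algebraMap_mul_eq_affine e hact α hab i
  have hexp : ∀ c : ι → K, ∑ i, algebraMap K M (c i) * y i =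
      ∑ j, algebraMap K M ((Matrix.vecMul c A) j) * z j +
        algebraMap K M (∑ i, c i * B i) := fun c ↦ by
    simp only [hyA, Matrix.vecMul, dotProduct, map_sum, map_mul, mul_add,
      Finset.sum_add_distrib, Finset.mul_sum, Finset.sum_mul, mul_assoc]
    rw [Finset.sum_comm]
  -- linear independence over the base field
  have hF : ∀ c : ι → F, ∀ d : K,
      ∑ i, algebraMap F M (c i) * y i = algebraMap K M d → c = 0 := by
    intro c d hc
    have hvec : ∀ j, Matrix.vecMul (fun i ↦ algebraMap F K (c i)) A j = 0 := by
      refine hz.eq_zero_of_sum_add_eq_zero (d₀ := ∑ i, algebraMap F K (c i) * B i - d) ?_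
      rw [map_sub, ← hc, ← add_sub_assoc, ← hexp]
      simp only [← IsScalarTower.algebraMap_apply F K M, sub_self]
    funext j
    have hlin : ∑ σ : K ≃ₐ[F] K, (∑ i, c i * a (e.symm σ) i j) • σ α = 0 := by
      rw [← hvec j, ← Fintype.sum_equiv e.toEquiv
        (fun g ↦ (∑ i, c i * a g i j) • e g α) _ (fun g ↦ by simp)]
      simp only [hA, Matrix.vecMul, dotProduct, Matrix.of_apply, Algebra.smul_def, map_sum,
        map_mul, Finset.mul_sum, Finset.sum_mul]
      rw [Finset.sum_comm]
      exact Finset.sum_congr rfl fun i _ ↦ Finset.sum_congr rfl fun g _ ↦ by ring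
    have := Fintype.linearIndependent_iff.1 hα.1 _ hlin 1
    simpa [ha, Pi.single_apply] using this
  intro hdet
  obtain ⟨v, hv0, hv⟩ := Matrix.exists_vecMul_eq_zero_iff.2 hdet
  have hvy : ∑ i, algebraMap K M (v i) * y i = algebraMap K M (∑ i, v i * B i) := by
    rw [hexp, hv]; simp
  apply hv0
  have htr : ∀ β : K, (fun i ↦ Algebra.trace F K (v i * β)) = 0 := fun β ↦ by
    refine hF _ (algebraMap F K (Algebra.trace F K ((∑ i, v i * B i) * β))) ?_
    have h := congrArg (fun m ↦ ∑ g : G, g • (m * algebraMap K M β)) hvy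
    simp only [Finset.sum_mul, Finset.smul_sum] at h
    rw [Finset.sum_comm] at h
    rw [← IsScalarTower.algebraMap_apply, ← sum_smul_algebraMap_eq_trace e hact, map_mul, ← h]
    refine Finset.sum_congr rfl fun i _ ↦ ?_
    rw [← sum_smul_algebraMap_eq_trace e hact, Finset.sum_mul]
    refine Finset.sum_congr rfl fun g _ ↦ ?_
    rw [mul_right_comm, smul_mul', hyfix, map_mul]
  funext i
  exact (traceForm_nondegenerate F K).1 (v i) fun β ↦ congrFun (htr β) i

/-- If `G` acts by affine maps over `F` on algebraically independent generators `z` of `M / K`,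
then the traces `∑ g, g • (α * z i)` with `α` a normal element again generate `M / K`. -/
theorem adjoin_traces_eq_top [DecidableEq ι]
    (e : G ≃* (K ≃ₐ[F] K))
    (hact : ∀ (g : G) (a : K), g • algebraMap K M a = algebraMap K M (e g a))
    {α : K} (hα : IsNormalElement F α) {z : ι → M}
    (hz : AlgebraicIndependent K z) (hztop : IntermediateField.adjoin K (Set.range z) = ⊤)
    {a : G → ι → ι → F} {b : G → ι → F}
    (hab : ∀ g i, g • z i = ∑ j, algebraMap F M (a g i j) * z j + algebraMap F M (b g i))
    (ha : ∀ i, a 1 i = Pi.single i 1) {y : ι → M}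
    (hy : ∀ i, y i = ∑ g : G, g • (algebraMap K M α * z i)) :
    IntermediateField.adjoin K (Set.range y) = ⊤ := by
  have hdet := det_linearPart_ne_zero e hact hα hz hab ha
  set A : Matrix ι ι K := Matrix.of fun i j ↦ ∑ g : G, e g α * algebraMap F K (a g i j) with hA
  set B : ι → K := fun i ↦ ∑ g : G, e g α * algebraMap F K (b g i) with hB
  have hyA : (fun i ↦ y i - algebraMap K M (B i)) = (A.map (algebraMap K M)).mulVec z := by
    funext i
    rw [hy, sum_smul_algebraMap_mul_eq_affine e hact α hab i]
    simp [hA, hB, Matrix.mulVec, dotProduct]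
  have hzA : z = ((A⁻¹).map (algebraMap K M)).mulVec fun i ↦ y i - algebraMap K M (B i) := by
    rw [hyA, Matrix.mulVec_mulVec, ← Matrix.map_mul, Matrix.nonsing_inv_mul _ hdet.isUnit]
    simp
  rw [← top_le_iff, ← hztop, IntermediateField.adjoin_le_iff]
  rintro _ ⟨i, rfl⟩
  rw [hzA]
  refine sum_mem fun j _ ↦ mul_mem (IntermediateField.algebraMap_mem _ _) (sub_mem ?_
    (IntermediateField.algebraMap_mem _ _))
  exact IntermediateField.subset_adjoin _ _ ⟨j, rfl⟩

/-- The no-name lemma for an action permuting algebraically independent generators `x` of `M / K`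
up to inversion. -/
theorem fixedPoints_subfield_eq_and_algebraicIndependent [DecidableEq ι]
    (e : G ≃* (K ≃ₐ[F] K))
    (hact : ∀ (g : G) (a : K), g • algebraMap K M a = algebraMap K M (e g a))
    {α : K} (hα : IsNormalElement F α) {x : ι → M} (hx : IsTranscendenceBasis K x)
    (hxtop : IntermediateField.adjoin K (Set.range x) = ⊤)
    (hxact : ∀ (g : G) (i : ι), ∃ j, g • x i = x j ∨ g • x i = (x j)⁻¹) {y : ι → M}
    (hy : ∀ i, y i = ∑ g : G, g • (algebraMap K M α / (1 + x i))) :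
    FixedPoints.subfield G M = (IntermediateField.adjoin F (Set.range y)).toSubfield ∧
      AlgebraicIndependent F y := by
  have hx1 : ∀ i, 1 + x i ≠ 0 := fun i h ↦
    hx.1.transcendental i ⟨1 + Polynomial.X, by
      intro h; simpa [Polynomial.coeff_one] using congrArg (Polynomial.coeff · 1) h,
      by simpa using h⟩
  have hx0 : ∀ i, x i ≠ 0 := hx.1.ne_zero
  set z : ι → M := fun i ↦ (1 + x i)⁻¹ with hz
  have hztop : IntermediateField.adjoin K (Set.range z) = ⊤ := by
    rw [← top_le_iff, ← hxtop, IntermediateField.adjoin_le_iff]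
    rintro _ ⟨i, rfl⟩
    have : x i = (z i)⁻¹ - 1 := by simp [hz]
    rw [this]
    exact sub_mem (inv_mem (IntermediateField.subset_adjoin _ _ ⟨i, rfl⟩)) (one_mem _)
  have hzind := algebraicIndependent_of_adjoin_eq_top hx hztop
  have hab : ∀ (g : G) (i : ι), ∃ (a : ι → F) (b : F),
      g • z i = ∑ j, algebraMap F M (a j) * z j + algebraMap F M b ∧
        (g = 1 → a = Pi.single i 1) := by
    intro g i
    by_cases hg : g = 1
    · exact ⟨Pi.single i 1, 0, by simp [hg, Pi.single_apply, apply_ite], fun _ ↦ rfl⟩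
    obtain ⟨j, hj | hj⟩ := hxact g i
    · refine ⟨Pi.single j 1, 0, ?_, fun h ↦ absurd h hg⟩
      simp [hz, Pi.single_apply, apply_ite, hj]
    · refine ⟨Pi.single j (-1), 1, ?_, fun h ↦ absurd h hg⟩
      have h1 := hx1 j
      have h0 := hx0 j
      have h2 : x j + 1 ≠ 0 := by rwa [add_comm]
      simp only [hz, smul_inv'', smul_add, smul_one, hj, Pi.single_apply,
        apply_ite, map_neg, map_one, map_zero, ite_mul, zero_mul, Finset.sum_ite_eq',
        Finset.mem_univ, if_true]
      field_simp
      ring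
  choose a b hab ha using hab
  have hytop := adjoin_traces_eq_top e hact hα hzind hztop hab (fun i ↦ ha 1 i rfl)
    (y := y) (by simpa only [div_eq_mul_inv] using hy)
  have hyind := algebraicIndependent_of_adjoin_eq_top hx hytop
  refine ⟨?_, ?_⟩
  · have hyfix : IntermediateField.adjoin F (Set.range y) ≤
        (FixedPoints.subfield G M).toIntermediateField (fun c g ↦ by
          rw [IsScalarTower.algebraMap_apply F K M, hact, AlgEquiv.commutes]) := by
      rw [IntermediateField.adjoin_le_iff]
      rintro _ ⟨i, rfl⟩ g
      simp only [hy, Finset.smul_sum, ← mul_smul]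
      exact Fintype.sum_equiv (Equiv.mulLeft g) _ _ fun _ ↦ rfl
    refine le_antisymm (fun m hm ↦ ?_) hyfix
    refine mem_of_fixed_of_adjoin_eq_top e hact (IntermediateField.adjoin F (Set.range y))
      (fun l hl g ↦ hyfix hl g) ?_ hm
    rw [eq_top_iff]
    intro x _
    have hx : x ∈ IntermediateField.adjoin K (Set.range y) := hytop ▸ IntermediateField.mem_top
    induction hx using IntermediateField.adjoin_induction with
    | mem x hx =>
      exact IntermediateField.algebraMap_mem _
        (⟨x, IntermediateField.subset_adjoin _ _ hx⟩ : IntermediateField.adjoin F (Set.range y))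
    | algebraMap c => exact IntermediateField.subset_adjoin _ _ ⟨c, rfl⟩
    | add x y _ _ hx hy => exact add_mem (hx trivial) (hy trivial)
    | mul x y _ _ hx hy => exact mul_mem (hx trivial) (hy trivial)
    | inv x _ hx => exact inv_mem (hx trivial)
  · exact hyind.restrictScalars (algebraMap F K).injective

end SemilinearAction

theorem isTranscendenceBasis_ratFuncX (n : ℕ) (K : Type*) [Field K] :
    IsTranscendenceBasis K (ratFuncX n K) :=
  have : Algebra.IsAlgebraic (MvPolynomial (Fin n) K) (FractionRing (MvPolynomial (Fin n) K)) :=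
    IsLocalization.isAlgebraic _ (nonZeroDivisors (MvPolynomial (Fin n) K))
  (IsTranscendenceBasis.mvPolynomial (Fin n) K).algebraMap_comp

theorem adjoin_ratFuncX_eq_top (n : ℕ) (K : Type*) [Field K] :
    IntermediateField.adjoin K (Set.range (ratFuncX n K)) = ⊤ := by
  rw [eq_top_iff]
  intro m _
  have hpoly : ∀ p : MvPolynomial (Fin n) K, algebraMap _ (FractionRing _) p ∈
      IntermediateField.adjoin K (Set.range (ratFuncX n K)) := fun p ↦ by
    induction p using MvPolynomial.induction_on with
    | C a =>
      rw [← MvPolynomial.algebraMap_eq, ← IsScalarTower.algebraMap_apply]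
      exact IntermediateField.algebraMap_mem _ _
    | add p q hp hq => rw [map_add]; exact add_mem hp hq
    | mul_X p i hp =>
      rw [map_mul]
      exact mul_mem hp (IntermediateField.subset_adjoin _ _ ⟨i, rfl⟩)
  obtain ⟨p, q, _, rfl⟩ := IsFractionRing.div_surjective (A := MvPolynomial (Fin n) K) m
  exact div_mem (hpoly p) (hpoly q)

/-- **Constructive no-name lemma, signed permutation case.**  Let `G` be a subgroup of the
group `𝔹_n` of `n × n` signed permutation matrices (each `g ∈ G` satisfies `g eᵢ = ± eⱼ` for
some `j`), let `K/F` be a finite Galois extension with Galois group identified with `G` via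
`e : G ≃* Gal(K/F)`, and let `α ∈ K` be a normal element for `K/F`.  Let `G` act on
`K(x₁, …, xₙ)` through the Galois action on `K` and by `g(xᵢ) = x_{ρ_g(i)}` when
`g eᵢ = e_{ρ_g(i)}` and `g(xᵢ) = x_{ρ_g(i)}⁻¹` when `g eᵢ = -e_{ρ_g(i)}`, and set
`yᵢ = ∑_{g ∈ G} g(α / (1 + xᵢ))`.  Then the fixed field of the `G`-action equals
`F(y₁, …, yₙ)`; in particular `y₁, …, yₙ` are algebraically independent over `F` (the
evaluation map `F[Y₁, …, Yₙ] → K(x₁, …, xₙ)`, `Yᵢ ↦ yᵢ`, is injective). -/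
theorem noname_lemma_signed_permutation_case
    (n : ℕ) (hn : 0 < n) (G : Subgroup (Matrix.GeneralLinearGroup (Fin n) ℤ)) [Fintype G]
    (hGsigned : ∀ g : G, ∀ i : Fin n, ∃ j : Fin n,
      sgnPermCol (g : Matrix.GeneralLinearGroup (Fin n) ℤ) i = Pi.single j 1 ∨
      sgnPermCol (g : Matrix.GeneralLinearGroup (Fin n) ℤ) i = - Pi.single j 1)
    (F K : Type*) [Field F] [Field K] [Algebra F K] [FiniteDimensional F K] [IsGalois F K]
    (e : G ≃* (K ≃ₐ[F] K)) (α : K) (hα : IsNormalElement F α)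
    [MulSemiringAction G (FractionRing (MvPolynomial (Fin n) K))]
    (hactK : ∀ (g : G) (a : K), g • ratFuncιK n K a = ratFuncιK n K ((e g) a))
    (hactX : ∀ (g : G) (i j : Fin n),
      (sgnPermCol (g : Matrix.GeneralLinearGroup (Fin n) ℤ) i = Pi.single j 1 →
        g • ratFuncX n K i = ratFuncX n K j) ∧
      (sgnPermCol (g : Matrix.GeneralLinearGroup (Fin n) ℤ) i = - Pi.single j 1 →
        g • ratFuncX n K i = (ratFuncX n K j)⁻¹))
    (y : Fin n → FractionRing (MvPolynomial (Fin n) K))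
    (hy : ∀ i : Fin n, y i = ∑ g : G, g • (ratFuncιK n K α / (1 + ratFuncX n K i))) :
    FixedPoints.subfield G (FractionRing (MvPolynomial (Fin n) K)) =
      Subfield.closure
        (Set.range ((ratFuncιK n K).comp (algebraMap F K)) ∪ Set.range y) ∧
    Function.Injective
      (MvPolynomial.eval₂Hom ((ratFuncιK n K).comp (algebraMap F K)) y) := by
  have hιK : ratFuncιK n K = algebraMap K (FractionRing (MvPolynomial (Fin n) K)) := by
    rw [IsScalarTower.algebraMap_eq K (MvPolynomial (Fin n) K)]; rfl
  have hιF : (ratFuncιK n K).comp (algebraMap F K) =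
      algebraMap F (FractionRing (MvPolynomial (Fin n) K)) := by
    rw [hιK, ← IsScalarTower.algebraMap_eq]
  rw [hιK] at hactK hy
  rw [hιF]
  exact fixedPoints_subfield_eq_and_algebraicIndependent e hactK hα
    (isTranscendenceBasis_ratFuncX n K) (adjoin_ratFuncX_eq_top n K)
    (fun g i ↦ (hGsigned g i).imp fun j ↦ Or.imp (hactX g i j).1 (hactX g i j).2) hy
end

section
/- Let K/F be a finite Galois extension with Galois group G, let n be a positive integer, and let M be an n×n matrix over K with columns M_1,…,M_n. Suppose there is a group homomorphism ρ : G → S_n (the symmetric group on {1,…,n}) such that for every g ∈ G and every i, applying g entrywise to the column M_i gives either M_{ρ(g)(i)} or −M_{ρ(g)(i)} (G permutes the columns of M up to sign). If the n entries of the first column M_1 are linearly independent over F, then M is invertible. -/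
/-- If `u` is `F`-linearly independent and `v` is orthogonal to every Galois conjugate of `u`,
then `v = 0`. -/
theorem eq_zero_of_forall_sum_mul_galois_conj_eq_zero
    {F K ι : Type*} [Field F] [Field K] [Algebra F K] [FiniteDimensional F K] [IsGalois F K]
    [Fintype ι] {u v : ι → K} (hu : LinearIndependent F u)
    (huv : ∀ g : K ≃ₐ[F] K, ∑ k, v k * g (u k) = 0) : v = 0 := by
  have htrace (c : K) (k : ι) : Algebra.trace F K (c * v k) = 0 := by
    refine Fintype.linearIndependent_iff.mp hu (fun k => Algebra.trace F K (c * v k)) ?_ k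
    simp_rw [Algebra.smul_def, trace_eq_sum_automorphisms, Finset.sum_mul]
    rw [Finset.sum_comm]
    refine Finset.sum_eq_zero fun g _ => ?_
    have hg : g (c * ∑ k, v k * g⁻¹ (u k)) = 0 := by rw [huv, mul_zero, map_zero]
    rw [Finset.mul_sum, map_sum] at hg
    simpa [mul_assoc] using hg
  ext k
  exact (traceForm_nondegenerate F K).2 (v k) fun c => htrace c k

/-- Let `K/F` be a finite Galois extension with Galois group `G = K ≃ₐ[F] K`, and let `M` be
an `n × n` matrix over `K`.  Suppose `G` permutes the columns of `M` up to sign, via a group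
homomorphism `ρ : G →* S_n`: applying `g` entrywise to the `i`-th column of `M` yields either
the `ρ(g)(i)`-th column or its negative.  If the entries of the first column of `M` are
`F`-linearly independent, then `M` is invertible. -/
theorem matrix_invertible_of_columns_permuted_up_to_sign
    (F K : Type*) [Field F] [Field K] [Algebra F K] [FiniteDimensional F K] [IsGalois F K]
    (n : ℕ) (hn : 0 < n) (M : Matrix (Fin n) (Fin n) K)
    (ρ : (K ≃ₐ[F] K) →* Equiv.Perm (Fin n))
    (hperm : ∀ (g : K ≃ₐ[F] K) (i : Fin n),
      (∀ k : Fin n, g (M k i) = M k (ρ g i)) ∨ (∀ k : Fin n, g (M k i) = - M k (ρ g i)))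
    (hind : LinearIndependent F (fun k : Fin n => M k ⟨0, hn⟩)) :
    IsUnit M := by
  rw [← Matrix.vecMul_injective_iff_isUnit]
  refine (injective_iff_map_eq_zero M.vecMulLinear).mpr fun v hv => ?_
  have hcol (i : Fin n) : ∑ k, v k * M k i = 0 := congrFun hv i
  refine eq_zero_of_forall_sum_mul_galois_conj_eq_zero hind fun g => ?_
  rcases hperm g ⟨0, hn⟩ with h | h
  · simp_rw [h, hcol]
  · simp_rw [h, mul_neg, Finset.sum_neg_distrib, hcol, neg_zero]
end

section
/- Let K/F be a finite Galois extension with Galois group G, let n be a positive integer, and let M be an n×n matrix over K with columns M_1,…,M_n. Suppose there is a group homomorphism ρ : G → S_n such that for every g ∈ G and every i, applying g entrywise to the column M_i gives M_{ρ(g)(i)}, and suppose the n entries of M_1 are linearly independent over F. Let H = {g ∈ G : g(M_1) = M_1} be the stabilizer of the first column. Then the index [G : H] equals n, and the orbit of M_1 under the entrywise G-action has exactly n elements; in particular the induced action of G on the set of columns {M_1,…,M_n} is transitive. -/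
/-- A vector annihilating every Galois conjugate of a vector with linearly independent entries
is zero. -/
lemma eq_zero_of_forall_sum_mul_conj_eq_zero {F K ι : Type*} [Field F] [Field K] [Algebra F K]
    [FiniteDimensional F K] [IsGalois F K] [Fintype ι] {v : ι → K}
    (hv : LinearIndependent F v) {w : ι → K}
    (hw : ∀ g : K ≃ₐ[F] K, ∑ k, w k * g (v k) = 0) : w = 0 := by
  have htrace (c : K) : ∑ k, Algebra.trace F K (w k * c) • v k = 0 := by
    simp_rw [Algebra.smul_def, trace_eq_sum_automorphisms, Finset.sum_mul]
    rw [Finset.sum_comm]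
    refine Finset.sum_eq_zero fun g _ => ?_
    have h := congrArg (fun x => g c * g x) (hw g⁻¹)
    simp only [map_sum, map_mul, map_zero, mul_zero, Finset.mul_sum] at h
    rw [← h]
    refine Finset.sum_congr rfl fun k _ => ?_
    have hk : g (g⁻¹ (v k)) = v k := g.apply_symm_apply (v k)
    rw [hk, map_mul]
    ring
  funext k
  refine (traceForm_nondegenerate F K).1 (w k) fun c => ?_
  exact Fintype.linearIndependent_iff.1 hv _ (htrace c) k

/-- A vector with linearly independent entries has at least as many Galois conjugates as
entries. -/
lemma card_le_ncard_orbit_of_linearIndependent {F K ι : Type*} [Field F] [Field K]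
    [Algebra F K] [FiniteDimensional F K] [IsGalois F K] [Fintype ι] {v : ι → K}
    (hv : LinearIndependent F v) :
    Fintype.card ι ≤ (MulAction.orbit (K ≃ₐ[F] K) v).ncard := by
  have : Fintype (MulAction.orbit (K ≃ₐ[F] K) v) :=
    (Set.finite_range fun g : K ≃ₐ[F] K => g • v).fintype
  let B : Matrix (MulAction.orbit (K ≃ₐ[F] K) v) ι K := Matrix.of fun u => u.1
  have hB : Function.Injective B.mulVecLin := by
    rw [injective_iff_map_eq_zero]
    refine fun w hw => eq_zero_of_forall_sum_mul_conj_eq_zero hv fun g => ?_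
    have h := congrFun hw ⟨g • v, MulAction.mem_orbit v g⟩
    simpa [B, Matrix.mulVec, dotProduct, mul_comm] using h
  have h := LinearMap.finrank_le_finrank_of_injective hB
  rwa [Module.finrank_fintype_fun_eq_card, Module.finrank_fintype_fun_eq_card,
    ← Nat.card_eq_fintype_card (α := MulAction.orbit (K ≃ₐ[F] K) v),
    Nat.card_coe_set_eq] at h

/-- Let `K/F` be a finite Galois extension with Galois group `G = K ≃ₐ[F] K`, and let `M` be an
`n × n` matrix over `K` whose columns are permuted (exactly, without signs) by the entrywise
action of `G`, via a group homomorphism `ρ : G →* S_n`.  Assume the entries of the first column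
`M₁` are `F`-linearly independent, and let `H` be the stabilizer of `M₁` in `G`.  Then
`[G : H] = n`, the orbit of `M₁` under the entrywise `G`-action has exactly `n` elements, and
the induced action of `G` on the set of columns of `M` is transitive. -/
theorem index_stabilizer_eq_and_orbit_card_eq_of_columns_permuted
    (F K : Type*) [Field F] [Field K] [Algebra F K] [FiniteDimensional F K] [IsGalois F K]
    (n : ℕ) (hn : 0 < n) (M : Matrix (Fin n) (Fin n) K)
    (ρ : (K ≃ₐ[F] K) →* Equiv.Perm (Fin n))
    (hperm : ∀ (g : K ≃ₐ[F] K) (i : Fin n) (k : Fin n), g (M k i) = M k (ρ g i))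
    (hind : LinearIndependent F (fun k : Fin n => M k ⟨0, hn⟩)) :
    (MulAction.stabilizer (K ≃ₐ[F] K) (fun k : Fin n => M k ⟨0, hn⟩)).index = n ∧
    (MulAction.orbit (K ≃ₐ[F] K) (fun k : Fin n => M k ⟨0, hn⟩)).ncard = n ∧
    (∀ i j : Fin n, ∃ g : K ≃ₐ[F] K, ∀ k : Fin n, g (M k i) = M k j) := by
  set v : Fin n → K := fun k => M k ⟨0, hn⟩
  have hsub : MulAction.orbit (K ≃ₐ[F] K) v ⊆ Set.range M.col := by
    rintro _ ⟨g, rfl⟩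
    exact ⟨ρ g ⟨0, hn⟩, funext fun k => (hperm g _ k).symm⟩
  have hle : (Set.range M.col).ncard ≤ n := by
    simpa [Set.image_univ, Set.ncard_univ] using Set.ncard_image_le (f := M.col) Set.finite_univ
  have hge : n ≤ (MulAction.orbit (K ≃ₐ[F] K) v).ncard := by
    simpa using card_le_ncard_orbit_of_linearIndependent hind
  have heq : MulAction.orbit (K ≃ₐ[F] K) v = Set.range M.col :=
    Set.eq_of_subset_of_ncard_le hsub (hle.trans hge) (Set.finite_range _)
  have hcard : (MulAction.orbit (K ≃ₐ[F] K) v).ncard = n := le_antisymm (heq ▸ hle) hge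
  refine ⟨(MulAction.index_stabilizer _ v).trans hcard, hcard, fun i j => ?_⟩
  have hmem (l : Fin n) : M.col l ∈ MulAction.orbit (K ≃ₐ[F] K) v := heq ▸ Set.mem_range_self l
  have hij : M.col j ∈ MulAction.orbit (K ≃ₐ[F] K) (M.col i) := by
    rw [MulAction.orbit_eq_iff.2 (hmem i)]
    exact hmem j
  obtain ⟨g, hg⟩ := hij
  exact ⟨g, fun k => congrFun hg k⟩
end

section
/- Let n be a positive integer, let G be a subgroup of the group 𝕊_n of n×n permutation matrices such that the induced action of G on {1,…,n} via g ↦ ρ_g is transitive, and let K/F be a finite Galois extension with Gal(K/F) identified with G. Let α ∈ K be a normal element for K/F. Then the n×n matrix M = [m_{i,j}] with entries m_{i,j} = Σ_{g ∈ G, ρ_g(i) = j} g(α) is invertible. -/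
/-- If the conjugates of `α` span `K`, a combination `∑ k, c k • k` of automorphisms that kills
every conjugate of `α` has zero coefficients. -/
theorem IsNormalElement.coeff_eq_zero {F K : Type*} [Field F] [Field K] [Algebra F K]
    {ι : Type*} [Fintype ι] {σ : ι → (K ≃ₐ[F] K)} (hσ : Function.Injective σ)
    {α : K} (hα : IsNormalElement F α) (c : ι → K)
    (h : ∀ τ : K ≃ₐ[F] K, ∑ k, c k * σ k (τ α) = 0) (k : ι) : c k = 0 := by
  have hzero : (∑ k, c k • (σ k).toLinearMap : K →ₗ[F] K) = 0 := by
    refine LinearMap.ext_on_range hα.2 fun τ => ?_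
    simpa using h τ
  have hli : LinearIndependent K (fun k : ι => ((σ k : K →* K) : K → K)) :=
    (linearIndependent_monoidHom K K).comp (fun k : ι => (σ k : K →* K)) fun a b hab =>
      hσ (AlgEquiv.ext fun x => DFunLike.congr_fun hab x)
  refine Fintype.linearIndependent_iff.mp hli c (funext fun x => ?_) k
  simpa using LinearMap.congr_fun hzero x

/-- Let `G` be a subgroup of the group `𝕊_n ≅ S_n` of `n × n` permutation matrices (a
permutation matrix `g` is identified with the permutation `ρ_g` sending `i` to `j` when
`g eᵢ = eⱼ`) acting transitively on `{1, …, n}`, let `K/F` be a finite Galois extension with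
Galois group identified with `G` via `e : G ≃* Gal(K/F)`, and let `α ∈ K` be a normal element
for `K/F`.  Then the `n × n` matrix with entries `m_{i,j} = ∑_{g ∈ G, ρ_g(i) = j} g(α)` is
invertible. -/
theorem coordinate_matrix_invertible_of_transitive
    (n : ℕ) (hn : 0 < n) (G : Subgroup (Equiv.Perm (Fin n))) [Fintype G]
    (htrans : ∀ i j : Fin n, ∃ g : G, (g : Equiv.Perm (Fin n)) i = j)
    (F K : Type*) [Field F] [Field K] [Algebra F K] [FiniteDimensional F K] [IsGalois F K]
    (e : G ≃* (K ≃ₐ[F] K)) (α : K) (hα : IsNormalElement F α) :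
    IsUnit (Matrix.of fun i j : Fin n =>
      ∑ g ∈ Finset.univ.filter (fun g : G => (g : Equiv.Perm (Fin n)) i = j), (e g) α) := by
  rw [← Matrix.mulVec_injective_iff_isUnit]
  refine (injective_iff_map_eq_zero (Matrix.mulVecLin _)).mpr fun v hv => funext fun i => ?_
  have hrow (j : Fin n) : ∑ g : G, e g α * v ((g : Equiv.Perm (Fin n)) j) = 0 := by
    have hj := congrFun hv j
    simp only [Matrix.mulVecLin_apply, Matrix.mulVec, dotProduct, Matrix.of_apply,
      Finset.sum_mul, Pi.zero_apply] at hj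
    rw [← hj, ← Finset.sum_fiberwise (s := Finset.univ)
      (g := fun g : G => (g : Equiv.Perm (Fin n)) j)]
    refine Finset.sum_congr rfl fun l _ => Finset.sum_congr rfl fun g hg => ?_
    rw [(Finset.mem_filter.mp hg).2]
  refine hα.coeff_eq_zero e.injective (fun k : G => v ((k : Equiv.Perm (Fin n)) i))
    (fun τ => ?_) 1
  obtain ⟨h, rfl⟩ := e.surjective τ
  rw [← hrow ((h : Equiv.Perm (Fin n))⁻¹ i)]
  refine Fintype.sum_equiv (Equiv.mulRight h) _ _ fun k => ?_
  simp [mul_comm]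
end

section
/- Let n be a positive integer, let G be a subgroup of the group 𝔹_n of n×n signed permutation matrices, and let K/F be a finite Galois extension with Gal(K/F) identified with G. Let α ∈ K. For i,j ∈ {1,…,n} define G^+_{i,j} = {g ∈ G : g e_i = e_j}, G^-_{i,j} = {g ∈ G : g e_i = −e_j}, and m_{i,j} = Σ_{g ∈ G^+_{i,j}} g(α) − Σ_{g ∈ G^-_{i,j}} g(α). Then for every h ∈ G and all i,j ∈ {1,…,n}: if h e_j = e_{ρ_h(j)} then h(m_{i,j}) = m_{i,ρ_h(j)}, and if h e_j = −e_{ρ_h(j)} then h(m_{i,j}) = −m_{i,ρ_h(j)}; that is, G permutes the columns of the matrix M = [m_{i,j}] up to sign. -/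
theorem sgnPermCol_mul {n : ℕ} (h g : Matrix.GeneralLinearGroup (Fin n) ℤ) (i : Fin n) :
    sgnPermCol (h * g) i = (h : Matrix (Fin n) (Fin n) ℤ).mulVec (sgnPermCol g i) := by
  simp only [sgnPermCol, Matrix.mulVec_mulVec, Units.val_mul]

theorem Matrix.GeneralLinearGroup.mulVec_injective {n : ℕ}
    (h : Matrix.GeneralLinearGroup (Fin n) ℤ) :
    Function.Injective (h : Matrix (Fin n) (Fin n) ℤ).mulVec :=
  Matrix.mulVec_injective_of_isUnit h.isUnit

/-- An element `h` carries the sum of the conjugates `g(α)` over `g eᵢ = v` to the sum over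
`g eᵢ = h v`. -/
theorem map_sum_filter_sgnPermCol {n : ℕ} {G : Subgroup (Matrix.GeneralLinearGroup (Fin n) ℤ)}
    [Fintype G] {F K : Type*} [Field F] [Field K] [Algebra F K]
    (e : G ≃* (K ≃ₐ[F] K)) (α : K) (h : G) (i : Fin n) {v w : Fin n → ℤ}
    (hvw : (h.1 : Matrix (Fin n) (Fin n) ℤ).mulVec v = w) :
    e h (∑ g ∈ Finset.univ.filter (fun g : G => sgnPermCol g.1 i = v), e g α) =
      ∑ g ∈ Finset.univ.filter (fun g : G => sgnPermCol g.1 i = w), e g α := by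
  rw [map_sum]
  refine Finset.sum_equiv (Equiv.mulLeft h) (fun g => ?_) (fun g _ => ?_)
  · simp [← hvw, sgnPermCol_mul, h.1.mulVec_injective.eq_iff]
  · simp

/-- Let `G` be a subgroup of the group `𝔹_n` of `n × n` signed permutation matrices (each
`g ∈ G` satisfies `g eᵢ = ± eⱼ` for some `j`), and let `K/F` be a finite Galois extension
whose Galois group is identified with `G` via `e : G ≃* Gal(K/F)`.  Let `α ∈ K` and set
`m_{i,j} = ∑_{g ∈ G, g eᵢ = eⱼ} g(α) - ∑_{g ∈ G, g eᵢ = -eⱼ} g(α)`.  Then for every `h ∈ G`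
and all `i, j, j'`: if `h eⱼ = eⱼ'` then `h(m_{i,j}) = m_{i,j'}`, and if `h eⱼ = -eⱼ'` then
`h(m_{i,j}) = -m_{i,j'}`; that is, `G` permutes the columns of `M = [m_{i,j}]` up to sign. -/
theorem galois_permutes_columns_up_to_sign
    (n : ℕ) (hn : 0 < n) (G : Subgroup (Matrix.GeneralLinearGroup (Fin n) ℤ)) [Fintype G]
    (hGsigned : ∀ g : G, ∀ i : Fin n, ∃ j : Fin n,
      sgnPermCol (g : Matrix.GeneralLinearGroup (Fin n) ℤ) i = Pi.single j 1 ∨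
      sgnPermCol (g : Matrix.GeneralLinearGroup (Fin n) ℤ) i = - Pi.single j 1)
    (F K : Type*) [Field F] [Field K] [Algebra F K] [FiniteDimensional F K] [IsGalois F K]
    (e : G ≃* (K ≃ₐ[F] K)) (α : K)
    (m : Fin n → Fin n → K)
    (hm : ∀ i j : Fin n, m i j =
      (∑ g ∈ Finset.univ.filter (fun g : G =>
        sgnPermCol (g : Matrix.GeneralLinearGroup (Fin n) ℤ) i = Pi.single j 1), (e g) α) -
      (∑ g ∈ Finset.univ.filter (fun g : G =>
        sgnPermCol (g : Matrix.GeneralLinearGroup (Fin n) ℤ) i = - Pi.single j 1), (e g) α)) :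
    ∀ (h : G) (i j j' : Fin n),
      (sgnPermCol (h : Matrix.GeneralLinearGroup (Fin n) ℤ) j = Pi.single j' 1 →
        (e h) (m i j) = m i j') ∧
      (sgnPermCol (h : Matrix.GeneralLinearGroup (Fin n) ℤ) j = - Pi.single j' 1 →
        (e h) (m i j) = - m i j') := by
  intro h i j j'
  refine ⟨fun hj => ?_, fun hj => ?_⟩
  · rw [hm, hm, map_sub, map_sum_filter_sgnPermCol e α h i hj,
      map_sum_filter_sgnPermCol e α h i ((Matrix.mulVec_neg _ _).trans (congrArg Neg.neg hj))]
  · rw [hm, hm, map_sub, map_sum_filter_sgnPermCol e α h i hj,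
      map_sum_filter_sgnPermCol e α h i
        ((Matrix.mulVec_neg _ _).trans ((congrArg Neg.neg hj).trans (neg_neg _))), neg_sub]
end

section
/- Let n be a positive integer, let G be a subgroup of the group 𝔹_n of n×n signed permutation matrices such that the induced action of G on {1,…,n} via g ↦ ρ_g is transitive, and let K/F be a finite Galois extension with Gal(K/F) identified with G. Let α ∈ K be a normal element for K/F. Then the n×n matrix M = [m_{i,j}] with entries m_{i,j} = Σ_{g ∈ G, g e_i = e_j} g(α) − Σ_{g ∈ G, g e_i = −e_j} g(α) is invertible. -/
open Matrix

/-- The matrix `(g h α)` of conjugates of a spanning element is invertible. -/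
lemma isUnit_matrix_conjugates_of_span_eq_top {G F K : Type*} [Group G] [Fintype G] [DecidableEq G]
    [Field F] [Field K] [Algebra F K] (e : G ≃* (K ≃ₐ[F] K)) {α : K}
    (hα : Submodule.span F (Set.range fun g : K ≃ₐ[F] K => g α) = ⊤) :
    IsUnit (Matrix.of fun h g : G => e (h * g) α) := by
  rw [← vecMul_injective_iff_isUnit, ← coe_vecMulLinear, injective_iff_map_eq_zero]
  intro d hd
  have hzero : ∑ h, d h • (e h).toLinearMap = 0 := by
    refine LinearMap.ext_on_range hα fun s => ?_
    obtain ⟨g, rfl⟩ := e.surjective s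
    simpa [vecMul, dotProduct] using congrFun hd g
  have hinj : Function.Injective fun g : G => (e g : K →* K) := fun g h hgh =>
    e.injective (AlgEquiv.ext fun x => DFunLike.congr_fun hgh x)
  have hli := (linearIndependent_monoidHom K K).comp _ hinj
  rw [Fintype.linearIndependent_iff] at hli
  refine funext (hli d (funext fun x => ?_))
  simpa using LinearMap.congr_fun hzero x

/-- For an integral representation `ρ` of the Galois group and a normal element `α`, the matrix
`∑ g, g(α) • (ρ g)ᵀ` is invertible. -/
lemma isUnit_sum_smul_transpose {G F K ι : Type*} [Group G] [Fintype G] [Fintype ι] [DecidableEq ι]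
    [Field F] [Field K] [Algebra F K] (ρ : G →* Matrix ι ι ℤ) (e : G ≃* (K ≃ₐ[F] K)) {α : K}
    (hα : Submodule.span F (Set.range fun g : K ≃ₐ[F] K => g α) = ⊤) :
    IsUnit (Matrix.of fun i j : ι => ∑ g, (ρ g j i : K) * e g α) := by
  classical
  rw [← vecMul_injective_iff_isUnit, ← coe_vecMulLinear, injective_iff_map_eq_zero]
  intro v hv
  have hv' (j : ι) : ∑ i, v i * ∑ g, (ρ g j i : K) * e g α = 0 := by
    simpa [vecMul, dotProduct] using congrFun hv j
  have htwist (h : G) (i j : ι) : ∑ g, (ρ g j i : K) * e (h * g) α =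
      ∑ k, (ρ h⁻¹ j k : K) * ∑ g, (ρ g k i : K) * e g α := by
    rw [← Equiv.sum_comp (Equiv.mulLeft h⁻¹)]
    simp only [Equiv.coe_mulLeft, mul_inv_cancel_left, map_mul ρ, mul_apply, Int.cast_sum,
      Int.cast_mul, Finset.sum_mul, Finset.mul_sum, mul_assoc]
    exact Finset.sum_comm
  have hcoeff (j : ι) : (fun g => ∑ i, v i * (ρ g j i : K)) = 0 := by
    apply mulVec_injective_of_isUnit (isUnit_matrix_conjugates_of_span_eq_top e hα)
    rw [mulVec_zero]
    funext h
    calc ∑ g, e (h * g) α * ∑ i, v i * (ρ g j i : K)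
        = ∑ i, v i * ∑ g, (ρ g j i : K) * e (h * g) α := by
          simp only [Finset.mul_sum]
          rw [Finset.sum_comm]
          exact Finset.sum_congr rfl fun i _ => Finset.sum_congr rfl fun g _ => by ring
      _ = ∑ k, (ρ h⁻¹ j k : K) * ∑ i, v i * ∑ g, (ρ g k i : K) * e g α := by
          simp only [htwist]
          simp only [Finset.mul_sum (s := (Finset.univ : Finset ι))]
          rw [Finset.sum_comm]
          exact Finset.sum_congr rfl fun i _ => Finset.sum_congr rfl fun g _ => by ring
      _ = 0 := by simp [hv']
  funext j
  simpa [one_apply] using congrFun (hcoeff j) 1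

/-- A sum over signed coordinate hits is a sum weighted by matrix entries. -/
lemma sum_filter_sub_sum_filter_eq_sum_coord {ι G K : Type*} [DecidableEq ι] [Fintype ι]
    [Fintype G] [Ring K] (c : G → ι → ℤ) (f : G → K)
    (hc : ∀ g, ∃ j, c g = Pi.single j 1 ∨ c g = -Pi.single j 1) (j : ι) :
    (∑ g ∈ Finset.univ.filter (fun g => c g = Pi.single j 1), f g) -
      (∑ g ∈ Finset.univ.filter (fun g => c g = -Pi.single j 1), f g) =
      ∑ g, (c g j : K) * f g := by
  rw [Finset.sum_filter, Finset.sum_filter, ← Finset.sum_sub_distrib]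
  refine Finset.sum_congr rfl fun g _ => ?_
  have hne (k : ι) : (Pi.single k 1 : ι → ℤ) ≠ -Pi.single j 1 := fun h => by
    have := congrFun h k
    by_cases hkj : k = j <;> simp [hkj] at this
  have hinj (k : ι) : (Pi.single k 1 : ι → ℤ) = Pi.single j 1 ↔ k = j := by
    refine ⟨fun h => ?_, fun h => h ▸ rfl⟩
    by_contra hkj
    simpa [hkj] using congrFun h k
  obtain ⟨k, hk | hk⟩ := hc g
  · rw [hk, if_neg (hne k)]
    simp only [hinj]
    by_cases hkj : k = j
    · simp [hkj]
    · simp [hkj, Ne.symm hkj]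
  · have hne' : -(Pi.single k 1 : ι → ℤ) ≠ Pi.single j 1 := fun h => hne k (by rw [← h, neg_neg])
    rw [hk, if_neg hne']
    simp only [neg_inj, hinj]
    by_cases hkj : k = j
    · simp [hkj]
    · simp [hkj, Ne.symm hkj]

/-- Let `G` be a subgroup of the group `𝔹_n` of `n × n` signed permutation matrices (each
`g ∈ G` satisfies `g eᵢ = ± eⱼ` for some `j`) whose induced action on `{1, …, n}` is
transitive, let `K/F` be a finite Galois extension with Galois group identified with `G` via
`e : G ≃* Gal(K/F)`, and let `α ∈ K` be a normal element for `K/F`.  Then the `n × n` matrix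
with entries `m_{i,j} = ∑_{g ∈ G, g eᵢ = eⱼ} g(α) - ∑_{g ∈ G, g eᵢ = -eⱼ} g(α)` is
invertible. -/
theorem signed_coordinate_matrix_invertible_of_transitive
    (n : ℕ) (hn : 0 < n) (G : Subgroup (Matrix.GeneralLinearGroup (Fin n) ℤ)) [Fintype G]
    (hGsigned : ∀ g : G, ∀ i : Fin n, ∃ j : Fin n,
      sgnPermCol (g : Matrix.GeneralLinearGroup (Fin n) ℤ) i = Pi.single j 1 ∨
      sgnPermCol (g : Matrix.GeneralLinearGroup (Fin n) ℤ) i = - Pi.single j 1)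
    (htrans : ∀ i j : Fin n, ∃ g : G,
      sgnPermCol (g : Matrix.GeneralLinearGroup (Fin n) ℤ) i = Pi.single j 1 ∨
      sgnPermCol (g : Matrix.GeneralLinearGroup (Fin n) ℤ) i = - Pi.single j 1)
    (F K : Type*) [Field F] [Field K] [Algebra F K] [FiniteDimensional F K] [IsGalois F K]
    (e : G ≃* (K ≃ₐ[F] K)) (α : K) (hα : IsNormalElement F α) :
    IsUnit (Matrix.of fun i j : Fin n =>
      (∑ g ∈ Finset.univ.filter (fun g : G =>
        sgnPermCol (g : Matrix.GeneralLinearGroup (Fin n) ℤ) i = Pi.single j 1), (e g) α) -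
      (∑ g ∈ Finset.univ.filter (fun g : G =>
        sgnPermCol (g : Matrix.GeneralLinearGroup (Fin n) ℤ) i = - Pi.single j 1), (e g) α)) := by
  convert isUnit_sum_smul_transpose
    ((Units.coeHom (Matrix (Fin n) (Fin n) ℤ)).comp G.subtype) e hα.2 using 4 with i j
  rw [sum_filter_sub_sum_filter_eq_sum_coord
    (fun g : G => sgnPermCol (g : Matrix.GeneralLinearGroup (Fin n) ℤ) i) (fun g => e g α)
    (fun g => hGsigned g i) j]
  simp [sgnPermCol]
end

section
/- Let n be a positive integer, let G be a subgroup of the group 𝕊_n of n×n permutation matrices, and let K/F be a finite Galois extension with Gal(K/F) identified with G. Let α ∈ K be a normal element for K/F, and for i = 1,…,n set y_i = Σ_{g ∈ G} g(α x_i) = Σ_{g ∈ G} g(α)·x_{ρ_g(i)} ∈ K[x_1,…,x_n]. Then the ring of G-invariants of the Laurent polynomial ring K[x_1^{±1},…,x_n^{±1}] equals F[y_1,…,y_n] localized at the multiplicative set generated by x_1⋯x_n; that is, K[x_1^{±1},…,x_n^{±1}]^G = F[y_1,…,y_n]_{x_1⋯x_n} (note that x_1⋯x_n is G-invariant and K[x_1,…,x_n]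 = K[y_1,…,y_n]). -/
set_option maxHeartbeats 1000000
set_option synthInstance.maxHeartbeats 1000000

section SemilinearAction

variable {G ι F K L : Type*} [Group G] [Fintype G] [MulAction G ι]
  [Field F] [Field K] [Algebra F K] [Field L] [Algebra K L]

/-- Dedekind's independence of automorphisms in dual form: the vectors `(g β)_g` with `β ∈ K`
span the space of all functions `G → K`. -/
theorem span_range_conjugates_eq_top (e : G ≃* (K ≃ₐ[F] K)) :
    Submodule.span K (Set.range fun (β : K) (g : G) => e g β) = ⊤ := by
  classical
  by_contra hne
  obtain ⟨f, hf, hle⟩ := Submodule.exists_le_ker_of_lt_top _ (lt_top_iff_ne_top.mpr hne)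
  have hind : LinearIndependent K (fun (g : G) (β : K) => e g β) :=
    (linearIndependent_monoidHom K K).comp (fun g : G => ((e g : K →+* K) : K →* K))
      (fun g h hgh => e.injective <| AlgEquiv.ext fun β => DFunLike.congr_fun hgh β)
  rw [Fintype.linearIndependent_iff] at hind
  have hcoef : ∀ v : G → K, f v = ∑ g, f (Pi.single g 1) * v g := fun v => by
    conv_lhs => rw [pi_eq_sum_univ' v, map_sum]
    refine Finset.sum_congr rfl fun g _ => ?_
    rw [map_smul, smul_eq_mul, mul_comm]
  have hzero := hind (fun g => f (Pi.single g 1)) <| by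
    ext β
    have hβ : f (fun g => e g β) = 0 := hle (Submodule.subset_span ⟨β, rfl⟩)
    rw [hcoef] at hβ
    simpa using hβ
  refine hf (LinearMap.ext fun v => ?_)
  rw [hcoef]
  simp [hzero]

/-- The sums `∑ g, g β * x (g • j)` are `F`-linear combinations of the sums attached to a
normal element `α`. -/
theorem sum_conj_mul_mem (e : G ≃* (K ≃ₐ[F] K)) {α : K} (hα : IsNormalElement F α)
    (x : ι → L) (S : Subring L) (hF : ∀ a : F, algebraMap K L (algebraMap F K a) ∈ S)
    (hy : ∀ i, ∑ g : G, algebraMap K L (e g α) * x (g • i) ∈ S) (j : ι) (β : K) :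
    ∑ g : G, algebraMap K L (e g β) * x (g • j) ∈ S := by
  have hβ : β ∈ Submodule.span F (Set.range fun σ : K ≃ₐ[F] K => σ α) := by
    rw [hα.2]; trivial
  induction hβ using Submodule.span_induction with
  | mem β hβ =>
    obtain ⟨σ, rfl⟩ := hβ
    obtain ⟨t, rfl⟩ := e.surjective σ
    convert hy (t⁻¹ • j) using 1
    refine Fintype.sum_equiv (Equiv.mulRight t) _ _ fun g => ?_
    simp [mul_smul]
  | zero => simp
  | add β γ _ _ hβ hγ =>
    simpa only [map_add, add_mul, Finset.sum_add_distrib] using S.add_mem hβ hγ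
  | smul a β _ hβ =>
    convert S.mul_mem (hF a) hβ using 1
    simp [Algebra.smul_def, Finset.mul_sum, mul_assoc]

/-- Each `x j` lies in the `K`-algebra generated by `S`, as soon as `S` contains `F` and the sums
attached to a normal element. -/
theorem mem_adjoin_of_sum_conj_mem (e : G ≃* (K ≃ₐ[F] K)) {α : K} (hα : IsNormalElement F α)
    (x : ι → L) (S : Subring L) (hF : ∀ a : F, algebraMap K L (algebraMap F K a) ∈ S)
    (hy : ∀ i, ∑ g : G, algebraMap K L (e g α) * x (g • i) ∈ S) (j : ι) :
    x j ∈ Algebra.adjoin K (S : Set L) := by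
  classical
  have key : ∀ v : G → K,
      ∑ g : G, algebraMap K L (v g) * x (g • j) ∈ Algebra.adjoin K (S : Set L) := fun v => by
    have hv : v ∈ Submodule.span K (Set.range fun (β : K) (g : G) => e g β) := by
      rw [span_range_conjugates_eq_top]; trivial
    induction hv using Submodule.span_induction with
    | mem v hv =>
      obtain ⟨β, rfl⟩ := hv
      exact Algebra.subset_adjoin (sum_conj_mul_mem e hα x S hF hy j β)
    | zero => simp
    | add v w _ _ hv hw =>
      simpa only [Pi.add_apply, map_add, add_mul, Finset.sum_add_distrib] using add_mem hv hw
    | smul a v _ hv =>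
      convert Subalgebra.smul_mem _ hv a using 1
      simp [Algebra.smul_def, Finset.mul_sum, mul_assoc]
  simpa [Pi.single_apply, apply_ite (algebraMap K L)] using key (Pi.single 1 1)

variable [MulSemiringAction G L]

/-- Galois descent: an invariant element of the `K`-algebra generated by a ring `S ⊇ F` of
invariants lies in `S`. -/
theorem mem_of_mem_adjoin_of_invariant [FiniteDimensional F K] [IsGalois F K]
    (e : G ≃* (K ≃ₐ[F] K))
    (hactK : ∀ (g : G) (a : K), g • algebraMap K L a = algebraMap K L (e g a))
    (S : Subring L) (hF : ∀ a : F, algebraMap K L (algebraMap F K a) ∈ S)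
    (hS : ∀ s ∈ S, ∀ g : G, g • s = s) {z : L} (hz : z ∈ Algebra.adjoin K (S : Set L))
    (hinv : ∀ g : G, g • z = z) : z ∈ S := by
  have htr : ∀ c : K, ∑ g : G, algebraMap K L (e g c) =
      algebraMap K L (algebraMap F K (Algebra.trace F K c)) := fun c => by
    rw [trace_eq_sum_automorphisms, map_sum]
    exact Fintype.sum_equiv e.toEquiv _ _ fun _ => rfl
  have key : ∀ c : K, ∑ g : G, g • (algebraMap K L c * z) ∈ S := by
    rw [← Subalgebra.mem_toSubmodule, Algebra.adjoin_eq_span,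
      show Submonoid.closure (S : Set L) = S.toSubmonoid from
        Submonoid.closure_eq S.toSubmonoid] at hz
    clear hinv
    induction hz using Submodule.span_induction with
    | mem s hs =>
      intro c
      convert S.mul_mem (hF (Algebra.trace F K c)) hs using 1
      rw [← htr, Finset.sum_mul]
      exact Finset.sum_congr rfl fun g _ => by rw [smul_mul', hactK, hS s hs]
    | zero => simp
    | add v w _ _ hv hw =>
      intro c
      simpa only [mul_add, smul_add, Finset.sum_add_distrib] using S.add_mem (hv c) (hw c)
    | smul a v _ hv =>
      intro c
      simpa only [Algebra.smul_def, ← mul_assoc, ← map_mul] using hv (c * a)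
  obtain ⟨c, hc⟩ := Algebra.trace_surjective F K 1
  convert key c using 1
  simp only [smul_mul', hactK, hinv, ← Finset.sum_mul, htr, hc, map_one, one_mul]

/-- The invariants of the ring generated by `K`, the `x i` and the `(x i)⁻¹` under a semilinear
action of `Gal(K/F)` that permutes the `x i`. -/
theorem invariants_closure_eq [Fintype ι] [FiniteDimensional F K] [IsGalois F K]
    (e : G ≃* (K ≃ₐ[F] K)) {α : K} (hα : IsNormalElement F α)
    (hactK : ∀ (g : G) (a : K), g • algebraMap K L a = algebraMap K L (e g a))
    (x : ι → L) (hx0 : ∀ i, x i ≠ 0) (hactX : ∀ (g : G) (i : ι), g • x i = x (g • i))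
    (y : ι → L) (hy : ∀ i, y i = ∑ g : G, algebraMap K L (e g α) * x (g • i)) :
    {z : L | z ∈ Subring.closure (Set.range (algebraMap K L) ∪ Set.range x ∪
        Set.range (fun i => (x i)⁻¹)) ∧ ∀ g : G, g • z = z} =
      (Subring.closure (Set.range ((algebraMap K L).comp (algebraMap F K)) ∪ Set.range y ∪
        {(∏ i, x i)⁻¹}) : Set L) := by
  classical
  set S := Subring.closure (Set.range ((algebraMap K L).comp
    (algebraMap F K)) ∪ Set.range y ∪ {(∏ i, x i)⁻¹})
  have hFS : ∀ a : F, algebraMap K L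
      (algebraMap F K a) ∈ S := fun a => Subring.subset_closure (Or.inl (Or.inl ⟨a, rfl⟩))
  have hyS : ∀ i, ∑ g : G, algebraMap K L (e g α) *
      x (g • i) ∈ S := fun i => by
    have hi : y i ∈ S := Subring.subset_closure (Or.inl (Or.inr ⟨i, rfl⟩))
    rw [hy] at hi
    exact hi
  have hpS : (∏ i, x i)⁻¹ ∈ S := Subring.subset_closure (Or.inr rfl)
  have hinvS : ∀ s ∈ S, ∀ g : G, g • s = s := fun s hs g => by
    induction hs using Subring.closure_induction with
    | mem s hs =>
      rcases hs with (⟨a, rfl⟩ | ⟨i, rfl⟩) | rfl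
      · simp [hactK]
      · rw [hy, Finset.smul_sum]
        refine Fintype.sum_equiv (Equiv.mulLeft g) _ _ fun h => ?_
        simp [smul_mul', hactK, hactX, mul_smul]
      · rw [smul_inv'', Finset.smul_prod']
        simp only [hactX]
        exact congrArg _ (Equiv.prod_comp (MulAction.toPerm g) x)
    | zero => simp
    | one => simp
    | add a b _ _ ha hb => rw [smul_add, ha, hb]
    | neg a _ ha => rw [smul_neg, ha]
    | mul a b _ _ ha hb => rw [smul_mul', ha, hb]
  ext z
  simp only [Set.mem_ofPred_eq, SetLike.mem_coe]
  constructor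
  · rintro ⟨hz, hinv⟩
    refine mem_of_mem_adjoin_of_invariant e hactK S hFS hinvS ?_ hinv
    have hxA := mem_adjoin_of_sum_conj_mem e hα x S hFS hyS
    suffices hle : Subring.closure (Set.range (algebraMap K L) ∪ Set.range x ∪
        Set.range (fun i => (x i)⁻¹)) ≤ (Algebra.adjoin K (S : Set L)).toSubring from hle hz
    rw [Subring.closure_le]
    rintro _ ((⟨a, rfl⟩ | ⟨i, rfl⟩) | ⟨i, rfl⟩)
    · exact Subalgebra.algebraMap_mem _ a
    · exact hxA i
    · have hinv_eq : (x i)⁻¹ = (∏ j, x j)⁻¹ * ∏ j ∈ Finset.univ.erase i, x j := by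
        rw [← Finset.mul_prod_erase _ x (Finset.mem_univ i), mul_inv, mul_assoc,
          inv_mul_cancel₀ (Finset.prod_ne_zero_iff.mpr fun j _ => hx0 j), mul_one]
      simp only [SetLike.mem_coe, Subalgebra.mem_toSubring, hinv_eq]
      exact mul_mem (Algebra.subset_adjoin hpS) (prod_mem fun j _ => hxA j)
  · refine fun hz => ⟨?_, hinvS z hz⟩
    refine Subring.closure_le.mpr ?_ hz
    rintro _ ((⟨a, rfl⟩ | ⟨i, rfl⟩) | rfl)
    · exact Subring.subset_closure (Or.inl (Or.inl ⟨_, rfl⟩))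
    · rw [hy]
      exact sum_mem fun g _ => mul_mem (Subring.subset_closure (Or.inl (Or.inl ⟨_, rfl⟩)))
        (Subring.subset_closure (Or.inl (Or.inr ⟨_, rfl⟩)))
    · rw [← Finset.prod_inv_distrib]
      exact prod_mem fun i _ => Subring.subset_closure (Or.inr ⟨i, rfl⟩)

end SemilinearAction

/-- **Multiplicative invariants of a quasi-split torus.**  Let `G` be a subgroup of the group
`𝕊_n ≅ S_n` of `n × n` permutation matrices, let `K/F` be a finite Galois extension with
Galois group identified with `G` via `e : G ≃* Gal(K/F)`, and let `α ∈ K` be a normal element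
for `K/F`.  Let `G` act on `K(x₁, …, xₙ)` through the Galois action on `K` and by
`g(xᵢ) = x_{ρ_g(i)}`, and set `yᵢ = ∑_{g ∈ G} g(α)·x_{ρ_g(i)}`.  Then the ring of
`G`-invariants of the Laurent polynomial ring `K[x₁^{±1}, …, xₙ^{±1}]` (realized as the
subring of `K(x₁, …, xₙ)` generated by `K`, the `xᵢ` and the `xᵢ⁻¹`) equals
`F[y₁, …, yₙ]_{x₁⋯xₙ}`, the subring generated by `F`, the `yᵢ`, and `(x₁⋯xₙ)⁻¹`. -/
theorem laurent_invariants_eq_localized_polynomial_ring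
    (n : ℕ) (hn : 0 < n) (G : Subgroup (Equiv.Perm (Fin n))) [Fintype G]
    (F K : Type*) [Field F] [Field K] [Algebra F K] [FiniteDimensional F K] [IsGalois F K]
    (e : G ≃* (K ≃ₐ[F] K)) (α : K) (hα : IsNormalElement F α)
    [MulSemiringAction G (FractionRing (MvPolynomial (Fin n) K))]
    (hactK : ∀ (g : G) (a : K), g • ratFuncιK n K a = ratFuncιK n K ((e g) a))
    (hactX : ∀ (g : G) (i : Fin n),
      g • ratFuncX n K i = ratFuncX n K ((g : Equiv.Perm (Fin n)) i))
    (y : Fin n → FractionRing (MvPolynomial (Fin n) K))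
    (hy : ∀ i : Fin n, y i = ∑ g : G,
      ratFuncιK n K ((e g) α) * ratFuncX n K ((g : Equiv.Perm (Fin n)) i)) :
    {z : FractionRing (MvPolynomial (Fin n) K) |
        z ∈ Subring.closure (Set.range (ratFuncιK n K) ∪ Set.range (ratFuncX n K) ∪
          Set.range (fun i => (ratFuncX n K i)⁻¹)) ∧ ∀ g : G, g • z = z} =
      (Subring.closure (Set.range ((ratFuncιK n K).comp (algebraMap F K)) ∪ Set.range y ∪
        {(∏ i : Fin n, ratFuncX n K i)⁻¹}) : Set (FractionRing (MvPolynomial (Fin n) K))) := by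
  have hmap : ratFuncιK n K = algebraMap K (FractionRing (MvPolynomial (Fin n) K)) := by
    ext a
    rw [IsScalarTower.algebraMap_apply K (MvPolynomial (Fin n) K)]
    rfl
  have hx0 : ∀ i, ratFuncX n K i ≠ 0 := fun i => by
    simp [ratFuncX]
  simp only [hmap] at hactK hy ⊢
  exact invariants_closure_eq e hα hactK (ratFuncX n K) hx0 hactX y hy
end

section
/- Let n be a positive integer, let G be a subgroup of the group 𝕊_n of n×n permutation matrices such that the induced action of G on {1,…,n} via g ↦ ρ_g is transitive, and let K/F be a finite Galois extension with Gal(K/F) identified with G. Let α ∈ K be a normal element for K/F, and for i = 1,…,n set y_i = Σ_{g ∈ G} g(α)·x_{ρ_g(i)} ∈ K[x_1,…,x_n]. Then K[y_1,…,y_n] = K[x_1,…,x_n], i.e., the y_i generate the full polynomial ring over K; equivalently, the K-linear change of variables sending (x_1,…,x_n) to (y_1,…,y_n) is invertible. -/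
/-- If the conjugates of `α` span `K` over `F`, then the matrix `(k h⁻¹ α)`, with `h` indexing rows
and `k` columns, is invertible; in particular some combination of its rows is the indicator of the
identity. -/
theorem exists_sum_mul_conj_eq_single {G F K : Type*} [Group G] [Fintype G] [DecidableEq G]
    [Field F] [Field K] [Algebra F K] (e : G ≃* (K ≃ₐ[F] K)) {α : K}
    (hα : Submodule.span F (Set.range fun g : K ≃ₐ[F] K => g α) = ⊤) :
    ∃ c : G → K, ∀ k : G, ∑ h, c h * e (k * h⁻¹) α = (Pi.single 1 1 : G → K) k := by
  let M : Matrix G G K := Matrix.of fun h k => e (k * h⁻¹) α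
  have hM : Function.Injective M.mulVec := by
    rw [← Matrix.coe_mulVecLin, injective_iff_map_eq_zero]
    intro d hd
    have hli : LinearIndependent K fun k : G => (e k : K →ₐ[F] K).toLinearMap :=
      (linearIndependent_toLinearMap F K K).comp (fun k : G => (e k : K →ₐ[F] K)) fun a b hab =>
        e.injective (AlgEquiv.ext fun x => DFunLike.congr_fun hab x)
    refine funext (Fintype.linearIndependent_iff.mp hli d ?_)
    refine LinearMap.ext_on_range hα fun g => ?_
    obtain ⟨g, rfl⟩ := e.surjective g
    have hg := congrFun hd g⁻¹
    simpa [M, Matrix.mulVec, dotProduct, mul_comm, -map_inv] using hg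
  obtain ⟨c, hc⟩ := Matrix.vecMul_surjective_iff_isUnit.mpr
    (Matrix.mulVec_injective_iff_isUnit.mp hM) (Pi.single 1 1)
  exact ⟨c, fun k => congrFun hc k⟩

/-- Let `G` be a subgroup of the group `𝕊_n ≅ S_n` of `n × n` permutation matrices (a
permutation matrix `g` is identified with the permutation `ρ_g` sending `i` to `j` when
`g eᵢ = eⱼ`) acting transitively on `{1, …, n}`, let `K/F` be a finite Galois extension with
Galois group identified with `G` via `e : G ≃* Gal(K/F)`, and let `α ∈ K` be a normal element.
Set `yᵢ = ∑_{g ∈ G} g(α) · x_{ρ_g(i)} ∈ K[x₁, …, xₙ]`.  Then `K[y₁, …, yₙ] = K[x₁, …, xₙ]`,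
i.e. the `yᵢ` generate the whole polynomial ring as a `K`-algebra. -/
theorem polynomial_ring_generated_by_y
    (n : ℕ) (hn : 0 < n) (G : Subgroup (Equiv.Perm (Fin n))) [Fintype G]
    (htrans : ∀ i j : Fin n, ∃ g : G, (g : Equiv.Perm (Fin n)) i = j)
    (F K : Type*) [Field F] [Field K] [Algebra F K] [FiniteDimensional F K] [IsGalois F K]
    (e : G ≃* (K ≃ₐ[F] K)) (α : K) (hα : IsNormalElement F α)
    (y : Fin n → MvPolynomial (Fin n) K)
    (hy : ∀ i : Fin n, y i = ∑ g : G,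
      MvPolynomial.C ((e g) α) * MvPolynomial.X ((g : Equiv.Perm (Fin n)) i)) :
    Algebra.adjoin K (Set.range y) = ⊤ := by
  classical
  obtain ⟨c, hc⟩ := exists_sum_mul_conj_eq_single e hα.2
  have hX (i : Fin n) : ∑ h : G, MvPolynomial.C (c h) * y ((h : Equiv.Perm (Fin n)) i) =
      MvPolynomial.X i := by
    have hyh (h : G) : y ((h : Equiv.Perm (Fin n)) i) = ∑ k : G,
        MvPolynomial.C (e (k * h⁻¹) α) * MvPolynomial.X ((k : Equiv.Perm (Fin n)) i) := by
      rw [hy]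
      exact Fintype.sum_equiv (Equiv.mulRight h) _ _ fun g => by simp
    simp_rw [hyh, Finset.mul_sum, ← mul_assoc, ← MvPolynomial.C_mul]
    rw [Finset.sum_comm]
    simp_rw [← Finset.sum_mul, ← map_sum, hc]
    simp [Pi.single_apply, apply_ite MvPolynomial.C, ite_mul]
  rw [eq_top_iff, ← MvPolynomial.adjoin_range_X, Algebra.adjoin_le_iff]
  rintro _ ⟨i, rfl⟩
  rw [← hX i]
  exact sum_mem fun h _ => mul_mem (Subalgebra.algebraMap_mem _ (c h))
    (Algebra.subset_adjoin (Set.mem_range_self _))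
end
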